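/- Let φ : ℝ² → ℝ be convex, positively 1-homogeneous, positive on nonzero vectors, continuously differentiable on ℝ² \ {0}, and assume the sublevel set {x ∈ ℝ² : φ(x) ≤ 1} is strictly convex. Then the restriction of the gradient map F(ν) = ∇φ(ν) to the unit sphere S¹ is a continuous bijection from S¹ onto the topological frontier ∂W_φ of the Wulff shape; in particular (S¹ being compact) it is a homeomorphism of S¹ onto ∂W_φ. -/

import Mathlib

open scoped RealInnerProductSpace

/-- The Wulff shape of an anisotropic density `φ` on `ℝ²`:
`W_φ = {x : ⟪x, y⟫ ≤ φ(y) for all unit vectors y}`. -/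
def WulffShape (φ : EuclideanSpace ℝ (Fin 2) → ℝ) : Set (EuclideanSpace ℝ (Fin 2)) :=
  {x | ∀ y : EuclideanSpace ℝ (Fin 2), ‖y‖ = 1 → ⟪x, y⟫ ≤ φ y}

/-!
A positive, positively homogeneous `φ` with convex sublevel set `{φ ≤ 1}` is subadditive. Hence, by
Euler's identity and the subgradient inequality, `∇ φ ν` is the unique point `x` of the Wulff shape
with `⟪x, ν⟫ = φ ν`. The frontier of the Wulff shape consists of those of its points `x` for which
such a unit vector `ν` exists, so the gradient maps the sphere onto the frontier. If `ν` and `μ`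
are two such unit vectors for the same `x`, then `(φ ν)⁻¹ • ν` and `(φ μ)⁻¹ • μ` both maximize
`⟪x, ·⟫` on `{φ ≤ 1}`; strict convexity of this set makes them equal, whence `ν = μ`.
-/

open Set Filter Metric InnerProductSpace
open scoped Topology Gradient

section MaximaOfFunctionals

variable {E : Type*} [NormedAddCommGroup E] [NormedSpace ℝ E] {f : StrongDual ℝ E} {s : Set E}
  {a b : E}

lemma notMem_interior_of_isMaxOn (hf : f ≠ 0) (ha : IsMaxOn f s a) : a ∉ interior s := fun hi =>
  hf ((ha.isLocalMax (mem_interior_iff_mem_nhds.1 hi)).hasFDerivAt_eq_zero f.hasFDerivAt)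

lemma eq_of_isMaxOn_of_strictConvex (hs : StrictConvex ℝ s) (hf : f ≠ 0) (ha : a ∈ s) (hb : b ∈ s)
    (hmaxa : IsMaxOn f s a) (hmaxb : IsMaxOn f s b) : a = b := by
  have hab : f a = f b := le_antisymm (hmaxb ha) (hmaxa hb)
  have hmid : f ((1 / 2 : ℝ) • a + (1 / 2 : ℝ) • b) = f a := by
    rw [map_add, map_smul, map_smul, ← hab, ← add_smul, add_halves, one_smul]
  have hmaxmid : IsMaxOn f s ((1 / 2 : ℝ) • a + (1 / 2 : ℝ) • b) := fun y hy =>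
    (hmaxa hy).trans_eq hmid.symm
  exact hs.eq ha hb one_half_pos one_half_pos (add_halves 1) (notMem_interior_of_isMaxOn hf hmaxmid)

end MaximaOfFunctionals

lemma exists_homeomorph_of_bijOn {X Y : Type*} [TopologicalSpace X] [TopologicalSpace Y] [T2Space Y]
    {f : X → Y} {s : Set X} {t : Set Y} (hs : IsCompact s) (hf : ContinuousOn f s)
    (hst : BijOn f s t) : ∃ e : s ≃ₜ t, ∀ x : s, (e x : Y) = f x := by
  have : CompactSpace s := isCompact_iff_compactSpace.1 hs
  have he : Continuous (hst.equiv f) := hf.domRestrict.subtype_mk _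
  exact ⟨he.homeoOfEquivCompactToT2, fun _ => rfl⟩

lemma continuousOn_gradient_of_isOpen {𝕜 F : Type*} [RCLike 𝕜] [NormedAddCommGroup F]
    [InnerProductSpace 𝕜 F] [CompleteSpace F] {f : F → 𝕜} {s : Set F} (hf : ContDiffOn 𝕜 1 f s)
    (hs : IsOpen s) : ContinuousOn (∇ f) s :=
  (toDual 𝕜 F).symm.continuous.comp_continuousOn (hf.continuousOn_fderiv_of_isOpen hs le_rfl)

lemma isCompact_setOf_norm_eq (E : Type*) [NormedAddCommGroup E] [ProperSpace E] (r : ℝ) :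
    IsCompact {x : E | ‖x‖ = r} := by
  simpa [sphere] using isCompact_sphere (0 : E) r

section WulffSet

variable {E : Type*} [NormedAddCommGroup E] [InnerProductSpace ℝ E] {φ : E → ℝ} {x : E}

/-- The Wulff shape of a density `φ` on an arbitrary real inner product space. On `ℝ²` it unfolds to
`WulffShape φ`. -/
def wulffSet (φ : E → ℝ) : Set E := {x | ∀ y : E, ‖y‖ = 1 → ⟪x, y⟫ ≤ φ y}

lemma isClosed_wulffSet (φ : E → ℝ) : IsClosed (wulffSet φ) := by
  simp only [wulffSet, ofPred_forall]
  exact isClosed_iInter fun y => isClosed_iInter fun _ => isClosed_le (by fun_prop) (by fun_prop)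

lemma inner_lt_of_mem_interior_wulffSet (hx : x ∈ interior (wulffSet φ)) {y : E} (hy : ‖y‖ = 1) :
    ⟪x, y⟫ < φ y := by
  refine (interior_subset hx y hy).lt_of_ne fun heq => ?_
  have hne : innerSL ℝ y ≠ 0 := by
    rw [← norm_ne_zero_iff, innerSL_apply_norm, hy]
    exact one_ne_zero
  refine notMem_interior_of_isMaxOn hne (fun z hz => ?_) hx
  simpa only [mem_ofPred_eq, innerSL_apply_apply, real_inner_comm, heq] using hz y hy

lemma mem_interior_wulffSet_of_inner_lt [FiniteDimensional ℝ E]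
    (hφ : ContinuousOn φ {y | ‖y‖ = 1}) (hx : ∀ y : E, ‖y‖ = 1 → ⟪x, y⟫ < φ y) :
    x ∈ interior (wulffSet φ) := by
  have : CompactSpace {y : E | ‖y‖ = 1} :=
    isCompact_iff_compactSpace.1 (isCompact_setOf_norm_eq E 1)
  have hopen : IsOpen {p : E × {y : E | ‖y‖ = 1} | ⟪p.1, (p.2 : E)⟫ < φ p.2} :=
    isOpen_lt (by fun_prop) (hφ.domRestrict.comp continuous_snd)
  have hnear : ∀ᶠ z in 𝓝 x, ∀ y ∈ (univ : Set {y : E | ‖y‖ = 1}), ⟪z, (y : E)⟫ < φ y :=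
    isCompact_univ.eventually_forall_of_forall_eventually fun y _ =>
      hopen.mem_nhds (hx y y.2)
  exact mem_interior_iff_mem_nhds.2 <|
    hnear.mono fun z hz y hy => (hz ⟨y, hy⟩ (mem_univ _)).le

lemma mem_frontier_wulffSet_iff [FiniteDimensional ℝ E] (hφ : ContinuousOn φ {y | ‖y‖ = 1}) :
    x ∈ frontier (wulffSet φ) ↔ x ∈ wulffSet φ ∧ ∃ ν : E, ‖ν‖ = 1 ∧ ⟪x, ν⟫ = φ ν := by
  rw [(isClosed_wulffSet φ).frontier_eq, Set.mem_sdiff]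
  refine and_congr_right fun hx => ⟨fun hint => ?_, ?_⟩
  · by_contra! hne
    exact hint (mem_interior_wulffSet_of_inner_lt hφ fun y hy => (hx y hy).lt_of_ne (hne y hy))
  · rintro ⟨ν, hν, heq⟩ hint
    exact (inner_lt_of_mem_interior_wulffSet hint hν).ne heq

end WulffSet

/-- Positive homogeneity of degree one, the defining property of an anisotropic density. Only
factors `c > 0` are allowed, so `φ` need not be even. -/
def PosHomogeneous {E : Type*} [AddCommGroup E] [Module ℝ E] (φ : E → ℝ) : Prop :=
  ∀ c : ℝ, 0 < c → ∀ x : E, φ (c • x) = c * φ x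

namespace PosHomogeneous

section Module

variable {E : Type*} [AddCommGroup E] [Module ℝ E] {φ : E → ℝ}

lemma map_zero (hφ : PosHomogeneous φ) : φ 0 = 0 := by
  have h := hφ 2 two_pos 0
  rw [smul_zero] at h
  linarith

lemma map_inv_smul_self (hφ : PosHomogeneous φ) {x : E} (hx : 0 < φ x) :
    φ ((φ x)⁻¹ • x) = 1 := by
  rw [hφ _ (inv_pos.2 hx), inv_mul_cancel₀ hx.ne']

lemma map_add_le (hφ : PosHomogeneous φ) (hpos : ∀ x : E, x ≠ 0 → 0 < φ x)
    (hconv : Convex ℝ {x | φ x ≤ 1}) (x y : E) : φ (x + y) ≤ φ x + φ y := by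
  rcases eq_or_ne x 0 with rfl | hx0
  · simp [hφ.map_zero]
  rcases eq_or_ne y 0 with rfl | hy0
  · simp [hφ.map_zero]
  have hx : 0 < φ x := hpos x hx0
  have hy : 0 < φ y := hpos y hy0
  have hsum : 0 < φ x + φ y := add_pos hx hy
  have hmem : φ ((φ x / (φ x + φ y)) • (φ x)⁻¹ • x + (φ y / (φ x + φ y)) • (φ y)⁻¹ • y) ≤ 1 :=
    hconv (hφ.map_inv_smul_self hx).le (hφ.map_inv_smul_self hy).le (by positivity) (by positivity)
      (by field_simp)
  have hcomb : (φ x / (φ x + φ y)) • (φ x)⁻¹ • x + (φ y / (φ x + φ y)) • (φ y)⁻¹ • y =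
      (φ x + φ y)⁻¹ • (x + y) := by
    match_scalars <;> field_simp
  rwa [hcomb, hφ _ (inv_pos.2 hsum), inv_mul_le_iff₀ hsum, mul_one] at hmem

end Module

section InnerProductSpace

variable {E : Type*} [NormedAddCommGroup E] [InnerProductSpace ℝ E] {φ : E → ℝ} {x ν μ : E}

lemma mem_wulffSet_iff (hφ : PosHomogeneous φ) : x ∈ wulffSet φ ↔ ∀ y : E, ⟪x, y⟫ ≤ φ y := by
  refine ⟨fun hx y => ?_, fun hx y _ => hx y⟩
  rcases eq_or_ne y 0 with rfl | hy
  · simp [hφ.map_zero]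
  have hinv : 0 < ‖y‖⁻¹ := inv_pos.2 (norm_pos_iff.2 hy)
  have h := hx (‖y‖⁻¹ • y) (norm_smul_inv_norm hy)
  rw [hφ _ hinv, real_inner_smul_right] at h
  exact le_of_mul_le_mul_left h hinv

lemma sameRay_of_inner_eq (hφ : PosHomogeneous φ) (hstrict : StrictConvex ℝ {y | φ y ≤ 1})
    (hx : x ∈ wulffSet φ) (hν : 0 < φ ν) (hμ : 0 < φ μ) (hxν : ⟪x, ν⟫ = φ ν)
    (hxμ : ⟪x, μ⟫ = φ μ) : SameRay ℝ ν μ := by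
  have hmax : ∀ {η : E}, 0 < φ η → ⟪x, η⟫ = φ η →
      IsMaxOn (innerSL ℝ x) {y | φ y ≤ 1} ((φ η)⁻¹ • η) := by
    intro η hη hxη y hy
    calc ⟪x, y⟫ ≤ φ y := hφ.mem_wulffSet_iff.1 hx y
      _ ≤ 1 := hy
      _ = ⟪x, (φ η)⁻¹ • η⟫ := by rw [real_inner_smul_right, hxη, inv_mul_cancel₀ hη.ne']
  have hne : innerSL ℝ x ≠ 0 := fun h0 => by
    have h : ⟪x, ν⟫ = 0 := DFunLike.congr_fun h0 ν
    exact hν.ne' (hxν.symm.trans h)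
  have heq : (φ ν)⁻¹ • ν = (φ μ)⁻¹ • μ :=
    eq_of_isMaxOn_of_strictConvex hstrict hne (hφ.map_inv_smul_self hν).le
      (hφ.map_inv_smul_self hμ).le (hmax hν hxν) (hmax hμ hxμ)
  exact Or.inr (Or.inr ⟨_, _, inv_pos.2 hν, inv_pos.2 hμ, heq⟩)

end InnerProductSpace

end PosHomogeneous

section Gradient

variable {E : Type*} [NormedAddCommGroup E] [InnerProductSpace ℝ E] [CompleteSpace E] {φ : E → ℝ}
  {x ν : E}

lemma hasLineDerivAt_inner_gradient (hd : DifferentiableAt ℝ φ ν) (y : E) :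
    HasLineDerivAt ℝ φ ⟪∇ φ ν, y⟫ ν y := by
  simpa only [inner_gradient_left] using hd.hasFDerivAt.hasLineDerivAt y

lemma eq_gradient_of_inner_le (hd : DifferentiableAt ℝ φ ν) (hle : ∀ y : E, ⟪x, y⟫ ≤ φ y)
    (heq : ⟪x, ν⟫ = φ ν) : x = ∇ φ ν := by
  have hmin : IsLocalMin (fun y => φ y - innerSL ℝ x y) ν := Eventually.of_forall fun y => by
    simpa [heq] using hle y
  have hzero : fderiv ℝ φ ν - innerSL ℝ x = 0 :=
    hmin.hasFDerivAt_eq_zero (hd.hasFDerivAt.sub (innerSL ℝ x).hasFDerivAt)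
  refine ext_inner_right ℝ fun y => ?_
  rw [inner_gradient_left, sub_eq_zero.1 hzero, innerSL_apply_apply]

namespace PosHomogeneous

lemma inner_gradient_self (hφ : PosHomogeneous φ) (hd : DifferentiableAt ℝ φ ν) :
    ⟪∇ φ ν, ν⟫ = φ ν := by
  have hlin : HasDerivAt (fun t : ℝ => (1 + t) * φ ν) (φ ν) 0 := by
    simpa using ((hasDerivAt_id (0 : ℝ)).const_add 1).mul_const (φ ν)
  refine (hasLineDerivAt_inner_gradient hd ν).unique (hlin.congr_of_eventuallyEq ?_)
  filter_upwards [lt_mem_nhds (neg_one_lt_zero (R := ℝ))] with t ht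
  rw [← hφ (1 + t) (by linarith), add_smul, one_smul]

lemma inner_gradient_le (hφ : PosHomogeneous φ) (hadd : ∀ y z : E, φ (y + z) ≤ φ y + φ z)
    (hd : DifferentiableAt ℝ φ ν) (y : E) : ⟪∇ φ ν, y⟫ ≤ φ y := by
  refine le_of_tendsto (hasLineDerivAt_inner_gradient hd y).tendsto_slope_zero_right ?_
  filter_upwards [self_mem_nhdsWithin] with t (ht : 0 < t)
  rw [smul_eq_mul, inv_mul_le_iff₀ ht, sub_le_iff_le_add', ← hφ t ht]
  exact hadd ν (t • y)

lemma gradient_eq_iff (hφ : PosHomogeneous φ) (hadd : ∀ y z : E, φ (y + z) ≤ φ y + φ z)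
    (hd : DifferentiableAt ℝ φ ν) : ∇ φ ν = x ↔ x ∈ wulffSet φ ∧ ⟪x, ν⟫ = φ ν := by
  rw [hφ.mem_wulffSet_iff]
  constructor
  · rintro rfl
    exact ⟨hφ.inner_gradient_le hadd hd, hφ.inner_gradient_self hd⟩
  · rintro ⟨hle, heq⟩
    exact (eq_gradient_of_inner_le hd hle heq).symm

end PosHomogeneous

end Gradient

lemma PosHomogeneous.bijOn_gradient_frontier_wulffSet {E : Type*} [NormedAddCommGroup E]
    [InnerProductSpace ℝ E] [FiniteDimensional ℝ E] {φ : E → ℝ} (hφ : PosHomogeneous φ)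
    (hpos : ∀ x : E, x ≠ 0 → 0 < φ x) (hd : ∀ x : E, x ≠ 0 → DifferentiableAt ℝ φ x)
    (hstrict : StrictConvex ℝ {x | φ x ≤ 1}) :
    BijOn (∇ φ) {ν | ‖ν‖ = 1} (frontier (wulffSet φ)) := by
  have hne : ∀ {ν : E}, ‖ν‖ = 1 → ν ≠ 0 := fun hν => norm_ne_zero_iff.1 (hν ▸ one_ne_zero)
  have hcont : ContinuousOn φ {ν | ‖ν‖ = 1} := fun ν hν =>
    (hd ν (hne hν)).continuousAt.continuousWithinAt
  have hgrad : ∀ {ν x : E}, ‖ν‖ = 1 → (∇ φ ν = x ↔ x ∈ wulffSet φ ∧ ⟪x, ν⟫ = φ ν) := fun hν =>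
    hφ.gradient_eq_iff (hφ.map_add_le hpos hstrict.convex) (hd _ (hne hν))
  refine ⟨fun ν hν => ?_, fun ν hν μ hμ heq => ?_, fun x hx => ?_⟩
  · obtain ⟨hmem, htouch⟩ := (hgrad hν).1 rfl
    exact (mem_frontier_wulffSet_iff hcont).2 ⟨hmem, ν, hν, htouch⟩
  · obtain ⟨hmem, htouchν⟩ := (hgrad hν).1 heq
    obtain ⟨-, htouchμ⟩ := (hgrad hμ).1 rfl
    have hray : SameRay ℝ ν μ := hφ.sameRay_of_inner_eq hstrict hmem (hpos ν (hne hν))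
      (hpos μ (hne hμ)) htouchν htouchμ
    exact hray.eq_of_norm_eq (hν.trans hμ.symm)
  · obtain ⟨hmem, ν, hν, htouch⟩ := (mem_frontier_wulffSet_iff hcont).1 hx
    exact ⟨ν, hν, (hgrad hν).2 ⟨hmem, htouch⟩⟩

theorem gradient_homeomorph_sphere_frontier_wulffShape_general
    {E : Type*} [NormedAddCommGroup E] [InnerProductSpace ℝ E] [FiniteDimensional ℝ E] {φ : E → ℝ}
    (hφ : PosHomogeneous φ) (hpos : ∀ x : E, x ≠ 0 → 0 < φ x)
    (hC1 : ContDiffOn ℝ 1 φ {x | x ≠ 0}) (hstrict : StrictConvex ℝ {x | φ x ≤ 1}) :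
    ContinuousOn (∇ φ) {ν | ‖ν‖ = 1} ∧
    BijOn (∇ φ) {ν | ‖ν‖ = 1} (frontier (wulffSet φ)) ∧
    ∃ h : {ν : E | ‖ν‖ = 1} ≃ₜ frontier (wulffSet φ),
      ∀ ν : {ν : E | ‖ν‖ = 1}, (h ν : E) = ∇ φ ν := by
  have hcont : ContinuousOn (∇ φ) {ν | ‖ν‖ = 1} :=
    (continuousOn_gradient_of_isOpen hC1 isOpen_ne).mono fun ν hν =>
      norm_ne_zero_iff.1 (ne_of_eq_of_ne hν one_ne_zero)
  have hbij : BijOn (∇ φ) {ν | ‖ν‖ = 1} (frontier (wulffSet φ)) :=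
    hφ.bijOn_gradient_frontier_wulffSet hpos
      (fun _ hx => (hC1.differentiableOn one_ne_zero).differentiableAt (isOpen_ne.mem_nhds hx))
      hstrict
  exact ⟨hcont, hbij, exists_homeomorph_of_bijOn (isCompact_setOf_norm_eq E 1) hcont hbij⟩

/-- If `φ : ℝ² → ℝ` is convex, positively 1-homogeneous, positive on nonzero vectors,
continuously differentiable away from `0`, and its unit sublevel set is strictly convex,
then the gradient map `F(ν) = ∇φ(ν)` restricted to the unit sphere is a continuous
bijection onto the frontier of the Wulff shape, and (the sphere being compact) induces
a homeomorphism of `S¹` onto `∂W_φ`. -/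
theorem gradient_homeomorph_sphere_frontier_wulffShape
    (φ : EuclideanSpace ℝ (Fin 2) → ℝ)
    (hconv : ConvexOn ℝ Set.univ φ)
    (hhom : ∀ c : ℝ, 0 < c → ∀ x : EuclideanSpace ℝ (Fin 2), φ (c • x) = c * φ x)
    (hpos : ∀ x : EuclideanSpace ℝ (Fin 2), x ≠ 0 → 0 < φ x)
    (hC1 : ContDiffOn ℝ 1 φ {x : EuclideanSpace ℝ (Fin 2) | x ≠ 0})
    (hstrict : StrictConvex ℝ {x : EuclideanSpace ℝ (Fin 2) | φ x ≤ 1}) :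
    ContinuousOn (gradient φ) {ν : EuclideanSpace ℝ (Fin 2) | ‖ν‖ = 1} ∧
    Set.BijOn (gradient φ) {ν : EuclideanSpace ℝ (Fin 2) | ‖ν‖ = 1}
      (frontier (WulffShape φ)) ∧
    ∃ h : ({ν : EuclideanSpace ℝ (Fin 2) | ‖ν‖ = 1} : Set (EuclideanSpace ℝ (Fin 2))) ≃ₜ
        (frontier (WulffShape φ) : Set (EuclideanSpace ℝ (Fin 2))),
      ∀ ν : ({ν : EuclideanSpace ℝ (Fin 2) | ‖ν‖ = 1} : Set (EuclideanSpace ℝ (Fin 2))),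
        (h ν : EuclideanSpace ℝ (Fin 2)) = gradient φ (ν : EuclideanSpace ℝ (Fin 2)) :=
  gradient_homeomorph_sphere_frontier_wulffShape_general hhom hpos hC1 hstrict
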